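/- arXiv:2306.03215 — 4 statements merged into one kernel-verified Lean document; each statement's English description precedes it below -/
import Mathlib

section
/- Fix n : ℕ, a level function c : Fin (n+1) → ℝ and v : ℝ. Let λ_{c,v} := {p : (Fin (n+1) → ℝ) × ℝ | ∀ i, (c i ≤ v → p.1 i ≤ p.2) ∧ (v ≤ c i → p.2 ≤ p.1 i)}. Then the image of λ_{c,v} under the projection π := Prod.fst equals {a : Fin (n+1) → ℝ | ∀ i j, c i ≤ v → v ≤ c j → a i ≤ a j}. -/
section Separation

variable {α : Type*} [SemilatticeSup α] {s t : Set α}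

/-- The least upper bound of `s` separates `s` from `t` unless `s` is empty, in which case any lower
bound of `t` does. -/
theorem nonempty_upperBounds_inter_lowerBounds_iff (hs : s.Finite) (ht : BddBelow t) :
    (upperBounds s ∩ lowerBounds t).Nonempty ↔ ∀ a ∈ s, ∀ b ∈ t, a ≤ b := by
  constructor
  · rintro ⟨x, hsx, hxt⟩ a ha b hb
    exact (hsx ha).trans (hxt hb)
  · intro hst
    obtain rfl | hne := s.eq_empty_or_nonempty
    · rwa [upperBounds_empty, Set.univ_inter]
    · lift s to Finset α using hs
      have hlub : IsLUB (s : Set α) (s.sup' hne id) := s.isLUB_sup' hne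
      exact ⟨_, hlub.1, fun b hb => hlub.2 fun a ha => hst a ha b hb⟩

end Separation

section ScaffoldCone

variable {ι L α : Type*} [LE L]

/-- The cone `λ_{c,v}` of the minimal tropical scaffold: configurations `a` of points labelled by
`ι`, together with an auxiliary position `x` inserted at level `v` of the preorder on the labels
encoded by the level function `c`. -/
def scaffoldCone [LE α] (c : ι → L) (v : L) : Set ((ι → α) × α) :=
  {p | ∀ i, (c i ≤ v → p.1 i ≤ p.2) ∧ (v ≤ c i → p.2 ≤ p.1 i)}

theorem mk_mem_scaffoldCone_iff [Preorder α] {c : ι → L} {v : L} {a : ι → α} {x : α} :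
    (a, x) ∈ scaffoldCone c v ↔
      x ∈ upperBounds (a '' {i | c i ≤ v}) ∩ lowerBounds (a '' {i | v ≤ c i}) := by
  simp only [scaffoldCone, Set.mem_ofPred_eq, forall_and, Set.mem_inter_iff, mem_upperBounds,
    mem_lowerBounds, Set.forall_mem_image]

theorem mem_fst_image_scaffoldCone_iff [Preorder α] {c : ι → L} {v : L} {a : ι → α} :
    a ∈ Prod.fst '' scaffoldCone c v ↔
      (upperBounds (a '' {i | c i ≤ v}) ∩ lowerBounds (a '' {i | v ≤ c i})).Nonempty := by
  simp only [Set.mem_image, Prod.exists, exists_and_right, exists_eq_right,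
    mk_mem_scaffoldCone_iff, Set.Nonempty]

theorem proj_scaffold_cone_general [Finite ι] [SemilatticeSup α] [IsCodirectedOrder α] [Nonempty α]
    (c : ι → L) (v : L) :
    Prod.fst '' scaffoldCone c v = {a : ι → α | ∀ i j, c i ≤ v → v ≤ c j → a i ≤ a j} := by
  ext a
  have hlow : (a '' {i | c i ≤ v}).Finite := Set.toFinite _
  have hhigh : BddBelow (a '' {i | v ≤ c i}) := (Set.toFinite _).bddBelow
  rw [mem_fst_image_scaffoldCone_iff, nonempty_upperBounds_inter_lowerBounds_iff hlow hhigh]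
  simp only [Set.forall_mem_image, Set.mem_ofPred_eq]
  exact ⟨fun h i j hi hj => h hi hj, fun h i hi j hj => h i j hi hj⟩

end ScaffoldCone

/-- The image, under the projection forgetting the auxiliary coordinate `x`, of the
scaffold cone with `x` inserted at level `v`, is the set of configurations respecting
all comparisons through level `v`. -/
theorem proj_scaffold_cone (n : ℕ) (c : Fin (n + 1) → ℝ) (v : ℝ) :
    Prod.fst '' {p : (Fin (n + 1) → ℝ) × ℝ |
        ∀ i, (c i ≤ v → p.1 i ≤ p.2) ∧ (v ≤ c i → p.2 ≤ p.1 i)} =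
      {a : Fin (n + 1) → ℝ | ∀ i j, c i ≤ v → v ≤ c j → a i ≤ a j} :=
  proj_scaffold_cone_general c v
end

section
/- Fix n : ℕ and d : Fin (n+2) → ℝ. Let σ_d := {A : Fin (n+2) → ℝ | ∀ i j, d i ≤ d j → A i ≤ A j} and σ_{d ∘ Fin.castSucc} := {a : Fin (n+1) → ℝ | ∀ i j, d (Fin.castSucc i) ≤ d (Fin.castSucc j) → a i ≤ a j}. Then the image of σ_d under the map (Fin (n+2) → ℝ) → (Fin (n+1) → ℝ), A ↦ A ∘ Fin.castSucc, equals σ_{d ∘ Fin.castSucc}. -/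
/-!
A function `A` in the cone of `d` depends monotonically on the level. For finitely many labels this
dependence extends to a monotone function `g` on all levels, so that `A = g ∘ d`. Hence every point
of the cone of a restricted preorder `d ∘ e` is of the form `g ∘ (d ∘ e)` and lifts to `g ∘ d`.
-/

section

variable {ι κ P α : Type*} [Preorder P]

/-- The cone `σ_d` of the preorder on the labels `ι` encoded by the level function `d`. The levels
may lie in any preorder `P`, so the preorder on `ι` need not be total, and the coordinates in any
ordered type `α`; for `ι = Fin m` and `P = α = ℝ` these are the cones of the permutahedral fan
`Σ_{m-1}`. -/
def permutahedralCone (α : Type*) [LE α] (d : ι → P) : Set (ι → α) :=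
  {A | ∀ i j, d i ≤ d j → A i ≤ A j}

theorem comp_mem_permutahedralCone_comp [LE α] {d : ι → P} {A : ι → α}
    (hA : A ∈ permutahedralCone α d) (e : κ → ι) : A ∘ e ∈ permutahedralCone α (d ∘ e) :=
  fun i j => hA (e i) (e j)

theorem comp_mem_permutahedralCone_of_monotone [Preorder α] {g : P → α} (hg : Monotone g)
    (d : ι → P) : g ∘ d ∈ permutahedralCone α d :=
  fun _ _ hij => hg hij

theorem exists_monotone_comp_eq_of_mem_permutahedralCone [Finite ι] [SemilatticeSup α]
    {d : ι → P} {A : ι → α} (hA : A ∈ permutahedralCone α d) (hbdd : BddBelow (Set.range A)) :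
    ∃ g : P → α, Monotone g ∧ g ∘ d = A := by
  classical
  have := Fintype.ofFinite ι
  obtain ⟨m, hm⟩ := hbdd
  -- The lower bound `m` is the value of `g` at levels that lie above no level attained by `d`.
  let values (p : P) : Finset α := insert m (Finset.image A {i | d i ≤ p})
  let g (p : P) : α := (values p).sup' (Finset.insert_nonempty _ _) id
  have values_mono : Monotone values := fun p q hpq =>
    Finset.insert_subset_insert m <| Finset.image_subset_image <|
      Finset.monotone_filter_right _ fun _ _ hi => le_trans hi hpq
  have le_of_mem_values (j : ι) : ∀ x ∈ values (d j), x ≤ A j := by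
    simpa [values, hm (Set.mem_range_self j)] using fun i => hA i j
  have mem_values (j : ι) : A j ∈ values (d j) :=
    Finset.mem_insert_of_mem (Finset.mem_image_of_mem A (by simp))
  exact ⟨g, fun p q hpq => Finset.sup'_mono id (values_mono hpq) _, funext fun j =>
    (Finset.sup'_le _ _ (le_of_mem_values j)).antisymm (Finset.le_sup' id (mem_values j))⟩

theorem proj_permutahedral_cone_general [Finite κ] [Lattice α] [Nonempty α]
    (d : ι → P) (e : κ → ι) :
    (fun A : ι → α => A ∘ e) '' permutahedralCone α d = permutahedralCone α (d ∘ e) := by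
  refine Set.Subset.antisymm ?_ fun a ha => ?_
  · rintro _ ⟨A, hA, rfl⟩
    exact comp_mem_permutahedralCone_comp hA e
  · obtain ⟨g, hg, rfl⟩ :=
      exists_monotone_comp_eq_of_mem_permutahedralCone ha (Set.finite_range a).bddBelow
    exact ⟨g ∘ d, comp_mem_permutahedralCone_of_monotone hg d, rfl⟩

end

/-- Weak semistability of the projection `Σ_{n+1} → Σ_n`: forgetting the last coordinate
maps every permutahedral cone on `n+2` coordinates surjectively onto the permutahedral cone
on `n+1` coordinates given by the restricted preorder. -/
theorem proj_permutahedral_cone (n : ℕ) (d : Fin (n + 2) → ℝ) :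
    (fun A : Fin (n + 2) → ℝ => A ∘ Fin.castSucc) ''
        {A : Fin (n + 2) → ℝ | ∀ i j, d i ≤ d j → A i ≤ A j} =
      {a : Fin (n + 1) → ℝ |
        ∀ i j, d (Fin.castSucc i) ≤ d (Fin.castSucc j) → a i ≤ a j} :=
  proj_permutahedral_cone_general d Fin.castSucc
end

section
/- Fix n : ℕ, i : Fin (n+1), level functions c, c' : Fin (n+1) → ℝ, levels v, w : ℝ, and a sign ε : SignType. Define λ′ := {q : ((Fin (n+1) → ℝ) × (Fin (n+1) → ℝ)) × (ℝ × ℝ) | writing a := q.1.1, b := q.1.2, x := q.2.1, y := q.2.2: (∀ l, a i + b i ≤ a l + b l) ∧ (∀ j k, c j ≤ c k → a j ≤ a k) ∧ (∀ j k, c' j ≤ c' k → b j ≤ b k) ∧ (∀ l, (c l ≤ v → a l ≤ x) ∧ (v ≤ c l → x ≤ a l)) ∧ (∀ l, (c' l ≤ w → b l ≤ y) ∧ (w ≤ c' l → y ≤ b l)) ∧ (ε = 0 → x + y = a i + b i) ∧ (ε = 1 → a i + b i ≤ x + y) ∧ (ε = -1 → x + y ≤ a i + b i)}, and define σ′ :=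 {r : (Fin (n+1) → ℝ) × (Fin (n+1) → ℝ) | writing a := r.1, b := r.2: (∀ l, a i + b i ≤ a l + b l) ∧ (∀ j k, c j ≤ c k → a j ≤ a k) ∧ (∀ j k, c' j ≤ c' k → b j ≤ b k) ∧ (ε ≠ 1 → ∀ j k, c j ≤ v → c' k ≤ w → a j + b k ≤ a i + b i) ∧ (ε ≠ -1 → ∀ j k, v ≤ c j → w ≤ c' k → a i + b i ≤ a j + b k)}. Then Prod.fst '' λ′ = σ′. -/
/-!
Transitivity through `(x, y)` puts the projection of `λ′` inside `σ′`. The converse is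
Fourier–Motzkin elimination. Over a fixed `(a, b)`, the cone `λ′` bounds each of `x`, `y` and
`x + y` from below and above by finitely many numbers: by `L`, `L'`, `M` from below and by `U`,
`U'`, `N` from above. Eliminating `x` leaves for `y` the lower bounds `L'` and `M - U` and the upper
bounds `U'` and `N - L`. These are solvable as soon as each lower bound is at most each upper bound,
and the only such comparisons not already implied by `L ≤ U`, `L' ≤ U'`, `M ≤ N` are `L + L' ≤ N`
and `M ≤ U + U'`, the last two families of inequalities of `σ′`.
-/

open scoped Pointwise

/-- The set of solutions of a system of lower bounds `L` and upper bounds `U` on one variable.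
Either set may be empty. -/
def boundInterval {α : Type*} [Preorder α] (L U : Set α) : Set α :=
  upperBounds L ∩ lowerBounds U

section Order

variable {α : Type*}

theorem boundInterval_union [Preorder α] (L L' U U' : Set α) :
    boundInterval (L ∪ L') (U ∪ U') = boundInterval L U ∩ boundInterval L' U' := by
  simp only [boundInterval, upperBounds_union, lowerBounds_union, Set.inter_inter_inter_comm]

theorem boundInterval_nonempty_iff [LinearOrder α] [Nonempty α] {L U : Set α}
    (hL : L.Finite) (hU : U.Finite) : (boundInterval L U).Nonempty ↔ L ⊆ lowerBounds U := by
  refine ⟨fun ⟨x, hxL, hxU⟩ l hl u hu => (hxL hl).trans (hxU hu), fun hLU => ?_⟩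
  rcases L.eq_empty_or_nonempty with rfl | hne
  · obtain ⟨x, hx⟩ := hU.bddBelow
    exact ⟨x, by simp, hx⟩
  · obtain ⟨m, hm, hmax⟩ := L.exists_max_image id hL hne
    exact ⟨m, hmax, hLU hm⟩

theorem boundInterval_inter_nonempty_iff [LinearOrder α] [Nonempty α] {L U L' U' : Set α}
    (hL : L.Finite) (hU : U.Finite) (hL' : L'.Finite) (hU' : U'.Finite)
    (hLU : L ⊆ lowerBounds U) (hLU' : L' ⊆ lowerBounds U') :
    (boundInterval L U ∩ boundInterval L' U').Nonempty ↔
      L ⊆ lowerBounds U' ∧ L' ⊆ lowerBounds U := by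
  simp only [← boundInterval_union, boundInterval_nonempty_iff (hL.union hL') (hU.union hU'),
    lowerBounds_union, Set.union_subset_iff, Set.subset_inter_iff, hLU, hLU', true_and,
    and_comm]

end Order

section OrderedGroup

variable {G : Type*} [AddCommGroup G] [PartialOrder G] [IsOrderedAddMonoid G] {A B C D : Set G}

theorem subset_lowerBounds_sub_iff : A ⊆ lowerBounds (B - C) ↔ A + C ⊆ lowerBounds B := by
  constructor
  · rintro h _ ⟨a, ha, c, hc, rfl⟩ b hb
    exact le_sub_iff_add_le.1 (h ha (Set.sub_mem_sub hb hc))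
  · rintro h a ha _ ⟨b, hb, c, hc, rfl⟩
    exact le_sub_iff_add_le.2 (h (Set.add_mem_add ha hc) hb)

theorem sub_subset_lowerBounds_iff : A - B ⊆ lowerBounds C ↔ C + B ⊆ upperBounds A := by
  constructor
  · rintro h _ ⟨c, hc, b, hb, rfl⟩ a ha
    exact sub_le_iff_le_add.1 (h (Set.sub_mem_sub ha hb) hc)
  · rintro h _ ⟨a, ha, b, hb, rfl⟩ c hc
    exact sub_le_iff_le_add.2 (h (Set.add_mem_add hc hb) ha)

theorem sub_subset_lowerBounds_sub (hAC : A ⊆ lowerBounds C) (hDB : D ⊆ lowerBounds B) :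
    A - B ⊆ lowerBounds (C - D) := by
  rintro _ ⟨a, ha, b, hb, rfl⟩ _ ⟨c, hc, d, hd, rfl⟩
  exact sub_le_sub (hAC ha hc) (hDB hd hb)

theorem add_mem_boundInterval_iff {x y : G} :
    x + y ∈ boundInterval A B ↔ x ∈ boundInterval (A - {y}) (B - {y}) := by
  simp only [boundInterval, Set.mem_inter_iff, mem_upperBounds, mem_lowerBounds, Set.sub_singleton,
    Set.forall_mem_image, sub_le_iff_le_add, le_sub_iff_add_le]

end OrderedGroup

section FourierMotzkin

variable {G : Type*} [AddCommGroup G] [LinearOrder G] [IsOrderedAddMonoid G]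
  {L U L' U' M N : Set G}

theorem exists_add_mem_boundInterval_iff (hL : L.Finite) (hU : U.Finite) (hM : M.Finite)
    (hN : N.Finite) (hLU : L ⊆ lowerBounds U) (hMN : M ⊆ lowerBounds N) {y : G} :
    (∃ x ∈ boundInterval L U, x + y ∈ boundInterval M N) ↔ y ∈ boundInterval (M - U) (N - L) := by
  have hy : ({y} : Set G).Finite := Set.finite_singleton y
  have hMNy : M - {y} ⊆ lowerBounds (N - {y}) := sub_subset_lowerBounds_sub hMN (by simp)
  calc (∃ x ∈ boundInterval L U, x + y ∈ boundInterval M N)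
    _ ↔ (boundInterval L U ∩ boundInterval (M - {y}) (N - {y})).Nonempty := by
      simp only [add_mem_boundInterval_iff, Set.Nonempty, Set.mem_inter_iff]
    _ ↔ L ⊆ lowerBounds (N - {y}) ∧ M - {y} ⊆ lowerBounds U :=
      boundInterval_inter_nonempty_iff hL hU (hM.sub hy) (hN.sub hy) hLU hMNy
    _ ↔ {y} ⊆ lowerBounds (N - L) ∧ M - U ⊆ lowerBounds {y} := by
      simp only [subset_lowerBounds_sub_iff, sub_subset_lowerBounds_iff, add_comm]
    _ ↔ y ∈ boundInterval (M - U) (N - L) := by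
      simp [boundInterval, Set.subset_def, mem_upperBounds, and_comm]

theorem exists_exists_add_mem_boundInterval_iff (hL : L.Finite) (hU : U.Finite) (hL' : L'.Finite)
    (hU' : U'.Finite) (hM : M.Finite) (hN : N.Finite) (hLU : L ⊆ lowerBounds U)
    (hLU' : L' ⊆ lowerBounds U') (hMN : M ⊆ lowerBounds N) :
    (∃ y ∈ boundInterval L' U', ∃ x ∈ boundInterval L U, x + y ∈ boundInterval M N) ↔
      L + L' ⊆ lowerBounds N ∧ U + U' ⊆ upperBounds M := by
  have hMUNL : M - U ⊆ lowerBounds (N - L) := sub_subset_lowerBounds_sub hMN hLU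
  calc (∃ y ∈ boundInterval L' U', ∃ x ∈ boundInterval L U, x + y ∈ boundInterval M N)
    _ ↔ (boundInterval L' U' ∩ boundInterval (M - U) (N - L)).Nonempty := by
      simp only [exists_add_mem_boundInterval_iff hL hU hM hN hLU hMN, Set.Nonempty,
        Set.mem_inter_iff]
    _ ↔ L' ⊆ lowerBounds (N - L) ∧ M - U ⊆ lowerBounds U' :=
      boundInterval_inter_nonempty_iff hL' hU' (hM.sub hU) (hN.sub hL) hLU' hMUNL
    _ ↔ L + L' ⊆ lowerBounds N ∧ U + U' ⊆ upperBounds M := by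
      rw [subset_lowerBounds_sub_iff, sub_subset_lowerBounds_iff, add_comm L', add_comm U']

end FourierMotzkin

section Level

variable {ι α G : Type*} [Preorder α] [Preorder G]

/-- The positions of a point at level `v` relative to points at positions `a` and levels `c`: the
conditions (I′), or (II′), on the auxiliary coordinate. -/
def levelInterval (a : ι → G) (c : ι → α) (v : α) : Set G :=
  boundInterval (a '' {l | c l ≤ v}) (a '' {l | v ≤ c l})

theorem mem_levelInterval {a : ι → G} {c : ι → α} {v : α} {x : G} :
    x ∈ levelInterval a c v ↔ ∀ l, (c l ≤ v → a l ≤ x) ∧ (v ≤ c l → x ≤ a l) := by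
  simp only [levelInterval, boundInterval, Set.mem_inter_iff, mem_upperBounds, mem_lowerBounds,
    Set.forall_mem_image, Set.mem_ofPred_eq, forall_and]

theorem image_level_le_subset_lowerBounds {a : ι → G} {c : ι → α}
    (hac : ∀ j k, c j ≤ c k → a j ≤ a k) (v : α) :
    a '' {l | c l ≤ v} ⊆ lowerBounds (a '' {l | v ≤ c l}) := by
  rintro _ ⟨j, hj, rfl⟩ _ ⟨k, hk, rfl⟩
  exact hac j k (le_trans hj hk)

end Level

/-- The values whose comparison with `s` has sign `ε`, in the weak sense: condition (IV′). It is
written with `{t ∈ {s} | p}`, a bound by `s` that is present only when `p` holds. -/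
def signInterval {G : Type*} [Preorder G] (ε : SignType) (s : G) : Set G :=
  boundInterval {t ∈ ({s} : Set G) | ε ≠ -1} {t ∈ ({s} : Set G) | ε ≠ 1}

theorem mem_signInterval {G : Type*} [PartialOrder G] {ε : SignType} {s t : G} :
    t ∈ signInterval ε s ↔ (ε = 0 → t = s) ∧ (ε = 1 → s ≤ t) ∧ (ε = -1 → t ≤ s) := by
  have hbounds : t ∈ signInterval ε s ↔ (ε ≠ -1 → s ≤ t) ∧ (ε ≠ 1 → t ≤ s) := by
    simp [signInterval, boundInterval, mem_upperBounds, mem_lowerBounds]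
  rw [hbounds]
  cases ε <;> simp [le_antisymm_iff (a := t), and_comm]

theorem exists_levelInterval_add_mem_signInterval_iff {ι κ α β G : Type*} [Finite ι] [Finite κ]
    [Preorder α] [Preorder β] [AddCommGroup G] [LinearOrder G] [IsOrderedAddMonoid G]
    {a : ι → G} {b : κ → G} {c : ι → α} {c' : κ → β}
    (ha : ∀ j k, c j ≤ c k → a j ≤ a k) (hb : ∀ j k, c' j ≤ c' k → b j ≤ b k)
    (v : α) (w : β) (ε : SignType) (s : G) :
    (∃ y ∈ levelInterval b c' w, ∃ x ∈ levelInterval a c v, x + y ∈ signInterval ε s) ↔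
      (ε ≠ 1 → ∀ j k, c j ≤ v → c' k ≤ w → a j + b k ≤ s) ∧
      (ε ≠ -1 → ∀ j k, v ≤ c j → w ≤ c' k → s ≤ a j + b k) := by
  have hsign : {t ∈ ({s} : Set G) | ε ≠ -1} ⊆ lowerBounds {t ∈ ({s} : Set G) | ε ≠ 1} := by
    rintro _ ⟨rfl, -⟩ _ ⟨rfl, -⟩
    exact le_rfl
  refine (exists_exists_add_mem_boundInterval_iff
    (Set.toFinite _) (Set.toFinite _) (Set.toFinite _) (Set.toFinite _)
    (Set.toFinite _) (Set.toFinite _) (image_level_le_subset_lowerBounds ha v)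
    (image_level_le_subset_lowerBounds hb w) hsign).trans (and_congr ?_ ?_)
  all_goals
    simp only [Set.add_subset_iff, Set.forall_mem_image, Set.mem_ofPred_eq, mem_lowerBounds,
      mem_upperBounds, Set.mem_singleton_iff, and_imp, forall_eq]
    tauto

theorem proj_refined_bipermutahedral_scaffold_cone_general {ι α β G : Type*} [Finite ι]
    [Preorder α] [Preorder β] [AddCommGroup G] [LinearOrder G] [IsOrderedAddMonoid G]
    (i : ι) (c : ι → α) (c' : ι → β) (v : α) (w : β) (ε : SignType) :
    Prod.fst '' {q : ((ι → G) × (ι → G)) × (G × G) |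
        (∀ l, q.1.1 i + q.1.2 i ≤ q.1.1 l + q.1.2 l) ∧
        (∀ j k, c j ≤ c k → q.1.1 j ≤ q.1.1 k) ∧
        (∀ j k, c' j ≤ c' k → q.1.2 j ≤ q.1.2 k) ∧
        (∀ l, (c l ≤ v → q.1.1 l ≤ q.2.1) ∧ (v ≤ c l → q.2.1 ≤ q.1.1 l)) ∧
        (∀ l, (c' l ≤ w → q.1.2 l ≤ q.2.2) ∧ (w ≤ c' l → q.2.2 ≤ q.1.2 l)) ∧
        (ε = 0 → q.2.1 + q.2.2 = q.1.1 i + q.1.2 i) ∧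
        (ε = 1 → q.1.1 i + q.1.2 i ≤ q.2.1 + q.2.2) ∧
        (ε = -1 → q.2.1 + q.2.2 ≤ q.1.1 i + q.1.2 i)} =
      {r : (ι → G) × (ι → G) |
        (∀ l, r.1 i + r.2 i ≤ r.1 l + r.2 l) ∧
        (∀ j k, c j ≤ c k → r.1 j ≤ r.1 k) ∧
        (∀ j k, c' j ≤ c' k → r.2 j ≤ r.2 k) ∧
        (ε ≠ 1 → ∀ j k, c j ≤ v → c' k ≤ w → r.1 j + r.2 k ≤ r.1 i + r.2 i) ∧
        (ε ≠ -1 → ∀ j k, v ≤ c j → w ≤ c' k → r.1 i + r.2 i ≤ r.1 j + r.2 k)} := by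
  ext ⟨a, b⟩
  simp only [Set.mem_image, Set.mem_ofPred_eq, Prod.exists, exists_and_right, exists_eq_right,
    ← mem_levelInterval, ← mem_signInterval]
  constructor
  · rintro ⟨x, y, hmin, ha, hb, hx, hy, hxy⟩
    exact ⟨hmin, ha, hb,
      (exists_levelInterval_add_mem_signInterval_iff ha hb v w ε _).1 ⟨y, hy, x, hx, hxy⟩⟩
  · rintro ⟨hmin, ha, hb, hcone⟩
    obtain ⟨y, hy, x, hx, hxy⟩ :=
      (exists_levelInterval_add_mem_signInterval_iff ha hb v w ε _).2 hcone
    exact ⟨x, y, hmin, ha, hb, hx, hy, hxy⟩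

/-- Weak semistability for the refined bipermutahedral scaffold: the projection of a cone
`λ′` of `Λ_B′` over the region `𝒞_i` to configuration space is exactly the corresponding
bipermutahedral cone `σ′`. -/
theorem proj_refined_bipermutahedral_scaffold_cone (n : ℕ) (i : Fin (n + 1))
    (c c' : Fin (n + 1) → ℝ) (v w : ℝ) (ε : SignType) :
    Prod.fst '' {q : ((Fin (n + 1) → ℝ) × (Fin (n + 1) → ℝ)) × (ℝ × ℝ) |
        (∀ l, q.1.1 i + q.1.2 i ≤ q.1.1 l + q.1.2 l) ∧
        (∀ j k, c j ≤ c k → q.1.1 j ≤ q.1.1 k) ∧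
        (∀ j k, c' j ≤ c' k → q.1.2 j ≤ q.1.2 k) ∧
        (∀ l, (c l ≤ v → q.1.1 l ≤ q.2.1) ∧ (v ≤ c l → q.2.1 ≤ q.1.1 l)) ∧
        (∀ l, (c' l ≤ w → q.1.2 l ≤ q.2.2) ∧ (w ≤ c' l → q.2.2 ≤ q.1.2 l)) ∧
        (ε = 0 → q.2.1 + q.2.2 = q.1.1 i + q.1.2 i) ∧
        (ε = 1 → q.1.1 i + q.1.2 i ≤ q.2.1 + q.2.2) ∧
        (ε = -1 → q.2.1 + q.2.2 ≤ q.1.1 i + q.1.2 i)} =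
      {r : (Fin (n + 1) → ℝ) × (Fin (n + 1) → ℝ) |
        (∀ l, r.1 i + r.2 i ≤ r.1 l + r.2 l) ∧
        (∀ j k, c j ≤ c k → r.1 j ≤ r.1 k) ∧
        (∀ j k, c' j ≤ c' k → r.2 j ≤ r.2 k) ∧
        (ε ≠ 1 → ∀ j k, c j ≤ v → c' k ≤ w → r.1 j + r.2 k ≤ r.1 i + r.2 i) ∧
        (ε ≠ -1 → ∀ j k, v ≤ c j → w ≤ c' k → r.1 i + r.2 i ≤ r.1 j + r.2 k)} :=
  proj_refined_bipermutahedral_scaffold_cone_general i c c' v w ε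
end

section
/- Fix n : ℕ. Let a, b, c, c' : Fin (n+1) → ℝ and v, w, m : ℝ. Assume: (1) ∀ j k, c j ≤ c k → a j ≤ a k; (2) ∀ j k, c' j ≤ c' k → b j ≤ b k; (3) ∀ j k, c j ≤ v → c' k ≤ w → a j + b k ≤ m; (4) ∀ j k, v ≤ c j → w ≤ c' k → m ≤ a j + b k. Then there exist x, y : ℝ with x + y = m, (∀ j, c j ≤ v → a j ≤ x), (∀ j, v ≤ c j → x ≤ a j), (∀ k, c' k ≤ w → b k ≤ y), and (∀ k, w ≤ c' k → y ≤ b k). -/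
/-!
On the antidiagonal `y = m - x`, a lower bound on `y` is an upper bound on `x` and vice versa. So
all constraints bound `x` alone, from below by finitely many values and from above by finitely many
values. The four hypotheses compare each kind of lower bound with each kind of upper bound, so the
supremum of the lower bounds, if there are any, satisfies every constraint.
-/

/-- Finiteness of `U` provides the separating point when `L` is empty. -/
lemma exists_mem_upperBounds_mem_lowerBounds {α : Type*} [SemilatticeSup α]
    [IsCodirectedOrder α] [Nonempty α] {L U : Set α} (hL : L.Finite) (hU : U.Finite)
    (hLU : ∀ l ∈ L, ∀ u ∈ U, l ≤ u) : ∃ x, x ∈ upperBounds L ∧ x ∈ lowerBounds U := by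
  rcases L.eq_empty_or_nonempty with rfl | hne
  · obtain ⟨x, hx⟩ := hU.bddBelow
    exact ⟨x, by simp, hx⟩
  · lift L to Finset α using hL
    have hsup := L.isLUB_sup' hne
    exact ⟨_, hsup.1, fun u hu => hsup.2 fun l hl => hLU l hl u hu⟩

section LatticeOrderedGroup

variable {G : Type*} [AddCommGroup G] [Lattice G] [IsOrderedAddMonoid G]

lemma exists_add_eq_mem_upperBounds_mem_lowerBounds {A A' B B' : Set G} {m : G}
    (hA : A.Finite) (hA' : A'.Finite) (hB : B.Finite) (hB' : B'.Finite)
    (hAA' : ∀ a ∈ A, ∀ a' ∈ A', a ≤ a') (hBB' : ∀ b ∈ B, ∀ b' ∈ B', b ≤ b')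
    (hAB : ∀ a ∈ A, ∀ b ∈ B, a + b ≤ m) (hAB' : ∀ a' ∈ A', ∀ b' ∈ B', m ≤ a' + b') :
    ∃ x y, x + y = m ∧ (x ∈ upperBounds A ∧ x ∈ lowerBounds A') ∧
      y ∈ upperBounds B ∧ y ∈ lowerBounds B' := by
  have hLU : ∀ l ∈ A ∪ (m - ·) '' B', ∀ u ∈ A' ∪ (m - ·) '' B, l ≤ u := by
    rintro _ (ha | ⟨b', hb', rfl⟩) _ (ha' | ⟨b, hb, rfl⟩)
    · exact hAA' _ ha _ ha'
    · exact le_sub_iff_add_le.mpr (hAB _ ha b hb)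
    · exact sub_le_iff_le_add.mpr (hAB' _ ha' b' hb')
    · exact sub_le_sub_left (hBB' b hb b' hb') m
  obtain ⟨x, hxL, hxU⟩ := exists_mem_upperBounds_mem_lowerBounds
    (hA.union (hB'.image _)) (hA'.union (hB.image _)) hLU
  refine ⟨x, m - x, add_sub_cancel x m, ⟨fun a ha => hxL (.inl ha), fun a' ha' => hxU (.inl ha')⟩,
    fun b hb => ?_, fun b' hb' => ?_⟩
  · exact le_sub_comm.mp (hxU (.inr ⟨b, hb, rfl⟩))
  · exact sub_le_comm.mp (hxL (.inr ⟨b', hb', rfl⟩))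

theorem exists_antidiagonal_lift_general {ι κ P Q : Type*} [Finite ι] [Finite κ]
    [LE P] [LE Q] {a : ι → G} {b : κ → G} {c : ι → P} {c' : κ → Q}
    {v : P} {w : Q} {m : G}
    (ha : ∀ j k, c j ≤ v → v ≤ c k → a j ≤ a k)
    (hb : ∀ j k, c' j ≤ w → w ≤ c' k → b j ≤ b k)
    (hle : ∀ j k, c j ≤ v → c' k ≤ w → a j + b k ≤ m)
    (hge : ∀ j k, v ≤ c j → w ≤ c' k → m ≤ a j + b k) :
    ∃ x y : G, x + y = m ∧
      (∀ j, c j ≤ v → a j ≤ x) ∧ (∀ j, v ≤ c j → x ≤ a j) ∧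
      (∀ k, c' k ≤ w → b k ≤ y) ∧ (∀ k, w ≤ c' k → y ≤ b k) := by
  obtain ⟨x, y, hxy, ⟨hxl, hxu⟩, hyl, hyu⟩ := exists_add_eq_mem_upperBounds_mem_lowerBounds
    (A := a '' {j | c j ≤ v}) (A' := a '' {j | v ≤ c j})
    (B := b '' {k | c' k ≤ w}) (B' := b '' {k | w ≤ c' k})
    (Set.toFinite _) (Set.toFinite _) (Set.toFinite _) (Set.toFinite _)
    (by rintro _ ⟨j, hj, rfl⟩ _ ⟨k, hk, rfl⟩; exact ha j k hj hk)
    (by rintro _ ⟨j, hj, rfl⟩ _ ⟨k, hk, rfl⟩; exact hb j k hj hk)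
    (by rintro _ ⟨j, hj, rfl⟩ _ ⟨k, hk, rfl⟩; exact hle j k hj hk)
    (by rintro _ ⟨j, hj, rfl⟩ _ ⟨k, hk, rfl⟩; exact hge j k hj hk)
  exact ⟨x, y, hxy, fun j hj => hxl ⟨j, hj, rfl⟩, fun j hj => hxu ⟨j, hj, rfl⟩,
    fun k hk => hyl ⟨k, hk, rfl⟩, fun k hk => hyu ⟨k, hk, rfl⟩⟩

end LatticeOrderedGroup

/-- A point `(x, y)` on the antidiagonal `x + y = m` can always be inserted with `x` at
horizontal level `v` and `y` at vertical level `w`, provided the configuration satisfies the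
comparisons derivable by transitivity. -/
theorem exists_antidiagonal_lift (n : ℕ) (a b c c' : Fin (n + 1) → ℝ) (v w m : ℝ)
    (h1 : ∀ j k, c j ≤ c k → a j ≤ a k)
    (h2 : ∀ j k, c' j ≤ c' k → b j ≤ b k)
    (h3 : ∀ j k, c j ≤ v → c' k ≤ w → a j + b k ≤ m)
    (h4 : ∀ j k, v ≤ c j → w ≤ c' k → m ≤ a j + b k) :
    ∃ x y : ℝ, x + y = m ∧
      (∀ j, c j ≤ v → a j ≤ x) ∧ (∀ j, v ≤ c j → x ≤ a j) ∧
      (∀ k, c' k ≤ w → b k ≤ y) ∧ (∀ k, w ≤ c' k → y ≤ b k) :=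
  exists_antidiagonal_lift_general (fun j k hj hk => h1 j k (hj.trans hk))
    (fun j k hj hk => h2 j k (hj.trans hk)) h3 h4
end
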